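/- The map θ0 : A^∨ → Hom_A(J, A) sending φ to the restriction to J of 1⊗φ : A ⊗[k] A → A (a⊗b ↦ φ(b)·a) is A-linear, and the adjoint map θ1 : J → Hom_A(A^∨, A), defined by θ1(u)(φ) = (1⊗φ)(u), is an isomorphism of A-modules. -/

import Mathlib

/-!
For `A` finite projective over `k`, the contraction `u ↦ (φ ↦ (1 ⊗ φ)(u))` is a bijection from
`A ⊗[k] A` onto `Hom_k(A^∨, A)`.  By naturality it turns multiplication by `a ⊗ 1` into
multiplication by `a` on the target, and multiplication by `1 ⊗ a` into precomposition with the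
action of `a` on `A^∨`.  Since `I` is generated by the elements `1 ⊗ a - a ⊗ 1`, the ideal `J`
consists of the `u` for which the two agree, that is, whose contraction is `A`-linear.
-/

open TensorProduct

noncomputable section

variable (k A : Type*) [CommRing k] [CommRing A] [Algebra k A]

/-- `I`, the kernel of the multiplication map `μ : A ⊗[k] A → A`, as an ideal of `A ⊗[k] A`. -/
def Imul : Ideal (A ⊗[k] A) := RingHom.ker (Algebra.TensorProduct.lmul' k (S := A))

/-- `J = Ann_{A ⊗[k] A}(I)`, the annihilator of `I`.  Via the instance
`Algebra A (A ⊗[k] A)` given by `a ↦ a ⊗ 1`, the ideal `J` is an `A`-module. -/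
def Jann : Ideal (A ⊗[k] A) := Submodule.annihilator (Imul k A)

/-- The `k`-linear map `1 ⊗ φ : A ⊗[k] A → A`, `a ⊗ b ↦ φ(b)·a`. -/
def oneTensorMap (φ : Module.Dual k A) : A ⊗[k] A →ₗ[k] A :=
  TensorProduct.lift (LinearMap.flip ((LinearMap.lsmul k A).comp φ))

/-- The `A`-module structure on `A^∨ = Hom_k(A,k)` given by `(a·φ)(b) = φ(ab)`. -/
instance dualSMul : SMul A (Module.Dual k A) :=
  ⟨fun a φ => φ.comp (LinearMap.mulLeft k a)⟩

theorem dual_smul_apply (a : A) (φ : Module.Dual k A) (b : A) : (a • φ) b = φ (a * b) := rfl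

instance dualModule : Module A (Module.Dual k A) where
  one_smul φ := LinearMap.ext fun b => by rw [dual_smul_apply, one_mul]
  mul_smul a a' φ := LinearMap.ext fun b => by
    rw [dual_smul_apply, dual_smul_apply, dual_smul_apply]; congr 1; ring
  smul_zero a := LinearMap.ext fun b => by rw [dual_smul_apply]; rfl
  smul_add a φ ψ := LinearMap.ext fun b => by
    simp only [LinearMap.add_apply, dual_smul_apply]
  add_smul a a' φ := LinearMap.ext fun b => by
    simp only [LinearMap.add_apply, dual_smul_apply, add_mul, map_add]
  zero_smul φ := LinearMap.ext fun b => by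
    rw [dual_smul_apply, zero_mul, map_zero]; rfl

section Contraction

variable (R M N : Type*) [CommSemiring R] [AddCommMonoid M] [AddCommMonoid N] [Module R M]
  [Module R N]

/-- The contraction `N ⊗ M → Hom(M^∨, N)`, `n ⊗ m ↦ (φ ↦ φ(m)·n)`; for `M = N = A` it is
`u ↦ (φ ↦ (1 ⊗ φ)(u))`.  It is built from `dualTensorHom` so as to inherit the bijectivity of the
latter. -/
def contractDual : N ⊗[R] M →ₗ[R] Module.Dual R M →ₗ[R] N :=
  dualTensorHom R (Module.Dual R M) N ∘ₗ (Module.Dual.eval R M).rTensor N ∘ₗ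
    (TensorProduct.comm R N M).toLinearMap

variable {R M N}

@[simp]
theorem contractDual_tmul (n : N) (m : M) (φ : Module.Dual R M) :
    contractDual R M N (n ⊗ₜ m) φ = φ m • n :=
  rfl

theorem contractDual_rTensor {P : Type*} [AddCommMonoid P] [Module R P] (f : N →ₗ[R] P)
    (u : N ⊗[R] M) :
    contractDual R M P (f.rTensor M u) = f ∘ₗ contractDual R M N u := by
  induction u with
  | zero => simp
  | tmul n m => ext φ; simp
  | add u v hu hv => simp only [map_add, hu, hv, LinearMap.comp_add]

theorem contractDual_lTensor {P : Type*} [AddCommMonoid P] [Module R P] (f : M →ₗ[R] P)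
    (u : N ⊗[R] M) :
    contractDual R P N (f.lTensor N u) = contractDual R M N u ∘ₗ f.dualMap := by
  induction u with
  | zero => simp
  | tmul n m => ext φ; simp
  | add u v hu hv => simp only [map_add, hu, hv, LinearMap.add_comp]

theorem contractDual_bijective [Module.Finite R M] [Module.Projective R M] :
    Function.Bijective (contractDual R M N) :=
  dualTensorHom_bijective.comp <|
    ((Module.evalEquiv R M).rTensor N).bijective.comp (TensorProduct.comm R N M).bijective

end Contraction

instance : IsScalarTower k A (Module.Dual k A) where
  smul_assoc r a φ := by ext b; simp [dual_smul_apply]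

variable {k A}

theorem contractDual_apply_eq_oneTensorMap (u : A ⊗[k] A) (φ : Module.Dual k A) :
    contractDual k A A u φ = oneTensorMap k A φ u := by
  induction u with
  | zero => simp
  | tmul a b => rfl
  | add u v hu hv => simp only [map_add, LinearMap.add_apply, hu, hv]

theorem contractDual_tmul_one_mul {B C : Type*} [Semiring B] [Algebra k B] [Semiring C]
    [Algebra k C] (b : B) (u : B ⊗[k] C) (φ : Module.Dual k C) :
    contractDual k C B ((b ⊗ₜ[k] 1) * u) φ = b * contractDual k C B u φ := by
  have mul_eq_rTensor : (b ⊗ₜ[k] 1) * u = (LinearMap.mulLeft k b).rTensor C u := by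
    rw [← LinearMap.mulLeft_apply k, LinearMap.mulLeft_tmul, LinearMap.mulLeft_one,
      LinearMap.rTensor]
  rw [mul_eq_rTensor, contractDual_rTensor, LinearMap.comp_apply, LinearMap.mulLeft_apply]

theorem contractDual_one_tmul_mul {B : Type*} [Semiring B] [Algebra k B] (a : A)
    (u : B ⊗[k] A) (φ : Module.Dual k A) :
    contractDual k A B ((1 ⊗ₜ[k] a) * u) φ = contractDual k A B u (a • φ) := by
  have mul_eq_lTensor : (1 ⊗ₜ[k] a) * u = (LinearMap.mulLeft k a).lTensor B u := by
    rw [← LinearMap.mulLeft_apply k, LinearMap.mulLeft_tmul, LinearMap.mulLeft_one,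
      LinearMap.lTensor]
  rw [mul_eq_lTensor, contractDual_lTensor]
  rfl

theorem mem_Jann_iff {u : A ⊗[k] A} :
    u ∈ Jann k A ↔ ∀ a : A, (1 ⊗ₜ[k] a) * u = (a ⊗ₜ[k] 1) * u := by
  have Imul_eq_span :
      Imul k A = Ideal.span (Set.range fun a : A => (1 : A) ⊗ₜ[k] a - a ⊗ₜ[k] (1 : A)) :=
    (KaehlerDifferential.span_range_eq_ideal k A).symm
  simp [Jann, Imul_eq_span, Ideal.span, Submodule.mem_annihilator_span, mul_comm u, sub_mul,
    sub_eq_zero]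

theorem contractDual_smul_of_mem_Jann {u : A ⊗[k] A} (hu : u ∈ Jann k A) (a : A)
    (φ : Module.Dual k A) :
    contractDual k A A u (a • φ) = a * contractDual k A A u φ := by
  rw [← contractDual_one_tmul_mul, mem_Jann_iff.1 hu a, contractDual_tmul_one_mul]

theorem mem_Jann_of_contractDual_smul [Module.Finite k A] [Module.Projective k A]
    {u : A ⊗[k] A}
    (hu : ∀ (a : A) (φ : Module.Dual k A),
      contractDual k A A u (a • φ) = a * contractDual k A A u φ) :
    u ∈ Jann k A := by
  refine mem_Jann_iff.2 fun a => contractDual_bijective.injective (LinearMap.ext fun φ => ?_)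
  rw [contractDual_one_tmul_mul, contractDual_tmul_one_mul, hu]

variable (k A)

/-- The map `θ1 : J → Hom_A(A^∨, A)`, `θ1(u)(φ) = (1 ⊗ φ)(u)`. -/
def thetaOne : Jann k A →ₗ[A] Module.Dual k A →ₗ[A] A where
  toFun u :=
    { toFun := contractDual k A A u
      map_add' := map_add _
      map_smul' := contractDual_smul_of_mem_Jann u.2 }
  map_add' u v := by ext φ; simp
  map_smul' a u := by
    ext φ
    have coe_smul : ((a • u : Jann k A) : A ⊗[k] A) = (a ⊗ₜ[k] 1) * (u : A ⊗[k] A) :=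
      Algebra.smul_def a (u : A ⊗[k] A)
    simp [coe_smul, contractDual_tmul_one_mul]

/-- The map `θ0 : A^∨ → Hom_A(J, A)`, `θ0(φ)(u) = (1 ⊗ φ)(u)`, of which `θ1` is the adjoint. -/
def thetaZero : Module.Dual k A →ₗ[A] Jann k A →ₗ[A] A :=
  (thetaOne k A).flip

variable {k A}

theorem thetaOne_apply (u : Jann k A) (φ : Module.Dual k A) :
    thetaOne k A u φ = oneTensorMap k A φ u :=
  contractDual_apply_eq_oneTensorMap _ φ

theorem thetaZero_apply (φ : Module.Dual k A) (u : Jann k A) :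
    thetaZero k A φ u = oneTensorMap k A φ u :=
  thetaOne_apply u φ

variable (k A)

theorem thetaOne_bijective [Module.Finite k A] [Module.Projective k A] :
    Function.Bijective (thetaOne k A) := by
  constructor
  · intro u v huv
    refine Subtype.ext (contractDual_bijective.injective (LinearMap.ext fun φ => ?_))
    exact LinearMap.congr_fun huv φ
  · intro g
    obtain ⟨u, hu⟩ := contractDual_bijective.surjective (g.restrictScalars k)
    have contract_apply (φ : Module.Dual k A) : contractDual k A A u φ = g φ :=
      LinearMap.congr_fun hu φ
    have u_mem : u ∈ Jann k A :=
      mem_Jann_of_contractDual_smul fun a φ => by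
        rw [contract_apply, contract_apply, map_smul, smul_eq_mul]
    exact ⟨⟨u, u_mem⟩, LinearMap.ext contract_apply⟩

/-- Let `k` be a commutative ring and `A` a commutative `k`-algebra which is
finitely generated and projective as a `k`-module.  With `I = ker(μ)` and
`J = Ann_{A⊗[k]A}(I)` as above, the map `θ0 : A^∨ → Hom_A(J, A)`, sending `φ` to the
restriction to `J` of `1 ⊗ φ : A ⊗[k] A → A` (`a ⊗ b ↦ φ(b)·a`), is `A`-linear (in
particular each restriction is `A`-linear and lands in `A`), and the adjoint map
`θ1 : J → Hom_A(A^∨, A)`, `θ1(u)(φ) = (1 ⊗ φ)(u)`, is an isomorphism of `A`-modules. -/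
theorem stmt1 [Module.Finite k A] [Module.Projective k A] :
    (∃ Θ : Module.Dual k A →ₗ[A] (↥(Jann k A) →ₗ[A] A),
        ∀ (φ : Module.Dual k A) (x : ↥(Jann k A)),
          Θ φ x = oneTensorMap k A φ (x : A ⊗[k] A)) ∧
      ∃ e : ↥(Jann k A) ≃ₗ[A] (Module.Dual k A →ₗ[A] A),
        ∀ (u : ↥(Jann k A)) (φ : Module.Dual k A),
          e u φ = oneTensorMap k A φ (u : A ⊗[k] A) := by
  exact ⟨⟨thetaZero k A, thetaZero_apply⟩,
    LinearEquiv.ofBijective (thetaOne k A) (thetaOne_bijective k A), thetaOne_apply⟩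

end
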